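/- arXiv:2302.01587 — 2 statements merged into one kernel-verified Lean document; each statement's English description precedes it below -/
import Mathlib

section
/- If G is a finite connected block graph, then gp_e(G) ≤ C(s(G), 2) + 1, where s(G) is the number of simplicial vertices of G and C(n,2) = n(n−1)/2 denotes a binomial coefficient. -/
/-- `X` is an edge general position set of `G`: `X` consists of edges of `G` and every
shortest path of `G` contains at most two edges of `X`. -/
def SimpleGraph.IsEdgeGPSet {V : Type*} (G : SimpleGraph V) (X : Set (Sym2 V)) : Prop :=
  X ⊆ G.edgeSet ∧
    ∀ (u v : V) (p : G.Walk u v), p.IsPath → p.length = G.dist u v →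
      (X ∩ {e | e ∈ p.edges}).ncard ≤ 2

/-- The edge general position number of `G`. -/
noncomputable def SimpleGraph.egp {V : Type*} (G : SimpleGraph V) : ℕ :=
  sSup {n | ∃ X : Set (Sym2 V), G.IsEdgeGPSet X ∧ X.ncard = n}
/-- `G` is a block graph: every block (maximal connected subgraph without a cut-vertex)
of `G` is complete.  Equivalently — and this is the form used here — any two distinct
vertices lying on a common cycle of `G` are adjacent, i.e. the vertex set of every
cycle is a clique. -/
def SimpleGraph.IsBlockGraph {V : Type*} (G : SimpleGraph V) : Prop :=
  ∀ ⦃v : V⦄ (c : G.Walk v v), c.IsCycle → G.IsClique {x | x ∈ c.support}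

/-- A vertex is simplicial if its neighbourhood induces a complete subgraph. -/
def SimpleGraph.IsSimplicialVertex {V : Type*} (G : SimpleGraph V) (v : V) : Prop :=
  G.IsClique (G.neighborSet v)

/-- The set of simplicial edges of `G`: edges incident with at least one simplicial
vertex. -/
def SimpleGraph.simplicialEdges {V : Type*} (G : SimpleGraph V) : Set (Sym2 V) :=
  {e | e ∈ G.edgeSet ∧ ∃ v ∈ e, G.IsSimplicialVertex v}

/-!
An edge `uv` splits the vertices into those closer to `u`, those closer to `v` and the rest. In a
block graph the side of `u` can only be left through `u`, since any other exit closes a cycle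
through `uv`. So an edge *separating* `a` from `b` (one on each side) lies on every `a`-`b`
geodesic, and an edge general position set `X` has at most two edges separating a given pair.
Moreover each side of an edge contains a simplicial vertex, so each edge of `X` separates some pair
of simplicial vertices.

If each edge of `X` separated two such pairs, or one pair that no other edge of `X` separates,
double counting would give `|X| ≤ C(s, 2)`. Otherwise some `e` separates only the pair `a, b`, and
some `f ≠ e` in `X` separates it too. If `f` comes after `e` on the way from `a` to `b`, every
simplicial vertex other than `b` lies outside the far side of `e`, hence on the near side of `f`: so
`f` separates `b` from all other simplicial vertices.

Fix such `f` and `b`. For every `t ≠ b` at most one edge of `X` other than `f` separates `b` from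
`t`, so the edges separating `b` from something can be charged to the `s - 1` pairs at `b`. The
remaining edges do not separate `b` from anything, so none of them separates a vertex from all
others, and the double counting charges them to the pairs avoiding `b`. Hence `|X| - 1 ≤ C(s, 2)`.
-/

namespace EdgeGeneralPosition

open Finset SimpleGraph

section DoubleCounting

variable {α β : Type*}

/- Each `a` spreads a unit weight evenly over its relatives; as `b` receives at most
`1 / #(s.bipartiteBelow r b)` from each of its own, its total load is at most `1`. -/
theorem card_le_card_of_card_bipartiteBelow_le_card_bipartiteAbove
    {s : Finset α} {t : Finset β} (r : α → β → Prop) [∀ a b, Decidable (r a b)]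
    (hs : ∀ a ∈ s, (t.bipartiteAbove r a).Nonempty)
    (hr : ∀ a ∈ s, ∀ b ∈ t, r a b → #(s.bipartiteBelow r b) ≤ #(t.bipartiteAbove r a)) :
    #s ≤ #t := by
  have weight_le : ∀ a ∈ s, ∀ b ∈ t.bipartiteAbove r a,
      (#(t.bipartiteAbove r a) : ℚ)⁻¹ ≤ (#(s.bipartiteBelow r b) : ℚ)⁻¹ := by
    intro a ha b hb
    obtain ⟨hbt, hab⟩ := (mem_bipartiteAbove r).1 hb
    have hpos : 0 < #(s.bipartiteBelow r b) := card_pos.2 ⟨a, (mem_bipartiteBelow r).2 ⟨ha, hab⟩⟩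
    exact inv_anti₀ (by exact_mod_cast hpos) (by exact_mod_cast hr a ha b hbt hab)
  have key : (#s : ℚ) ≤ #t := calc
    (#s : ℚ) = ∑ a ∈ s, ∑ _b ∈ t.bipartiteAbove r a, (#(t.bipartiteAbove r a) : ℚ)⁻¹ := by
      rw [cast_card]
      refine sum_congr rfl fun a ha ↦ ?_
      rw [sum_const, nsmul_eq_mul, mul_inv_cancel₀]
      exact_mod_cast (card_pos.2 (hs a ha)).ne'
    _ ≤ ∑ a ∈ s, ∑ b ∈ t.bipartiteAbove r a, (#(s.bipartiteBelow r b) : ℚ)⁻¹ :=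
      sum_le_sum fun a ha ↦ sum_le_sum (weight_le a ha)
    _ = ∑ b ∈ t, ∑ _a ∈ s.bipartiteBelow r b, (#(s.bipartiteBelow r b) : ℚ)⁻¹ :=
      sum_sum_bipartiteAbove_eq_sum_sum_bipartiteBelow r _
    _ ≤ ∑ _b ∈ t, 1 := sum_le_sum fun b _ ↦ by
      rw [sum_const, nsmul_eq_mul]
      exact mul_inv_le_one
    _ = #t := by rw [cast_card]
  exact_mod_cast key

end DoubleCounting

section GraphFamilies

variable {α β : Type*} {X : Finset α} (H : α → SimpleGraph β) [∀ e, DecidableRel (H e).Adj]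

theorem card_le_card_of_forall_not_isUniversal {E : Finset (Sym2 β)}
    (hne : ∀ e ∈ X, (H e).edgeSet.Nonempty) (hE : ∀ e ∈ X, (H e).edgeSet ⊆ E)
    (htwo : ∀ a b, #{e ∈ X | (H e).Adj a b} ≤ 2)
    (huniv : ∀ e ∈ X, ∀ f ∈ X, e ≠ f → ∀ a b, (H e).edgeSet = {s(a, b)} → (H f).Adj a b →
      (H f).IsUniversal a ∨ (H f).IsUniversal b)
    (hnot : ∀ f ∈ X, ∀ a b, (H f).Adj a b → ¬(H f).IsUniversal a) :
    #X ≤ #E := by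
  classical
  have above_coe : ∀ e ∈ X, (E.bipartiteAbove (fun e p ↦ p ∈ (H e).edgeSet) e : Set (Sym2 β)) =
      (H e).edgeSet := fun e he ↦ by
    rw [coe_bipartiteAbove]
    exact Set.sep_mem_eq.trans (Set.inter_eq_right.2 (hE e he))
  refine card_le_card_of_card_bipartiteBelow_le_card_bipartiteAbove
    (fun e p ↦ p ∈ (H e).edgeSet) (fun e he ↦ ?_) fun e he p _ hp ↦ ?_
  · rw [← coe_nonempty, above_coe e he]
    exact hne e he
  induction p with | _ a b
  by_cases hsingle : (H e).edgeSet = {s(a, b)}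
  · have hbelow : X.bipartiteBelow (fun e p ↦ p ∈ (H e).edgeSet) s(a, b) ⊆ {e} := by
      intro f hf
      obtain ⟨hfX, hfab⟩ := (mem_bipartiteBelow _).1 hf
      rw [mem_edgeSet] at hfab
      by_contra hfe
      obtain ha | hb := huniv e he f hfX (Ne.symm (by simpa using hfe)) a b hsingle hfab
      · exact hnot f hfX a b hfab ha
      · exact hnot f hfX b a hfab.symm hb
    refine (card_le_card hbelow).trans (card_pos.2 ?_)
    rw [← coe_nonempty, above_coe e he]
    exact hne e he
  · have hnontrivial : (H e).edgeSet.Nontrivial :=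
      (hne e he).exists_eq_singleton_or_nontrivial.resolve_left fun ⟨q, hq⟩ ↦
        hsingle (by rw [hq] at hp ⊢; rw [Set.mem_singleton_iff.1 hp])
    rw [← above_coe e he] at hnontrivial
    exact (htwo a b).trans (one_lt_card_iff_nontrivial.2 hnontrivial)

variable [Fintype β]

/- Together with `f`, an edge of `X` separating `b` from `t` exhausts the two that are allowed. -/
theorem card_filter_mem_support_le_card_incidenceFinset [DecidableEq α] [DecidableEq β]
    {f : α} {b : β} [∀ e, Decidable (b ∈ (H e).support)]
    (htwo : ∀ a b, #{e ∈ X | (H e).Adj a b} ≤ 2) (hf : f ∈ X) (hfb : (H f).IsUniversal b) :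
    #{e ∈ X.erase f | b ∈ (H e).support} ≤ #((⊤ : SimpleGraph β).incidenceFinset b) := by
  refine card_le_card_of_forall_subsingleton (fun e p ↦ p ∈ (H e).edgeSet) (fun e he ↦ ?_)
    fun p hp e₁ he₁ e₂ he₂ ↦ ?_
  · obtain ⟨t, hbt⟩ := (mem_filter.1 he).2
    exact ⟨s(b, t), by simpa [mem_incidenceFinset, mk'_mem_incidenceSet_iff] using hbt.ne, hbt⟩
  · obtain ⟨htop, t, rfl⟩ := (mem_incidenceFinset _ _ _).1 hp
    have hbt : b ≠ t := by simpa using htop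
    obtain ⟨he₁, h₁⟩ := he₁
    obtain ⟨he₂, h₂⟩ := he₂
    rw [mem_filter, mem_erase] at he₁ he₂
    by_contra hne
    have hsub : {e₁, e₂, f} ⊆ ({e ∈ X | (H e).Adj b t} : Finset α) := by
      simp only [insert_subset_iff, singleton_subset_iff, mem_filter]
      exact ⟨⟨he₁.1.2, h₁⟩, ⟨he₂.1.2, h₂⟩, hf, hfb hbt⟩
    have hthree := (card_le_card hsub).trans (htwo b t)
    rw [card_eq_three.2 ⟨e₁, e₂, f, hne, he₁.1.1, he₂.1.1, rfl⟩] at hthree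
    omega

theorem card_le_choose_two_add_one
    (hne : ∀ e ∈ X, (H e).edgeSet.Nonempty)
    (htwo : ∀ a b, #{e ∈ X | (H e).Adj a b} ≤ 2)
    (huniv : ∀ e ∈ X, ∀ f ∈ X, e ≠ f → ∀ a b, (H e).edgeSet = {s(a, b)} → (H f).Adj a b →
      (H f).IsUniversal a ∨ (H f).IsUniversal b) :
    #X ≤ (Fintype.card β).choose 2 + 1 := by
  classical
  rw [← card_edgeFinset_top_eq_card_choose_two]
  by_cases hnot : ∀ f ∈ X, ∀ a b, (H f).Adj a b → ¬(H f).IsUniversal a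
  · refine (card_le_card_of_forall_not_isUniversal H hne (fun e _ ↦ ?_) htwo huniv hnot).trans
      (Nat.le_succ _)
    rw [coe_edgeFinset]
    exact edgeSet_mono le_top
  · push Not at hnot
    obtain ⟨f, hf, b, -, -, hfb⟩ := hnot
    set I := (⊤ : SimpleGraph β).incidenceFinset b
    set Y := {e ∈ X.erase f | b ∉ (H e).support}
    have hYX : Y ⊆ X := (filter_subset _ _).trans (erase_subset _ _)
    have hYb : ∀ e ∈ Y, b ∉ (H e).support := fun e he ↦ (mem_filter.1 he).2
    have at_b : #{e ∈ X.erase f | b ∈ (H e).support} ≤ #I :=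
      card_filter_mem_support_le_card_incidenceFinset H htwo hf hfb
    have off_b : #Y ≤ #((⊤ : SimpleGraph β).edgeFinset \ I) := by
      refine card_le_card_of_forall_not_isUniversal H (fun e he ↦ hne e (hYX he))
        (fun e he p hp ↦ ?_)
        (fun a c ↦ (card_le_card (filter_subset_filter _ hYX)).trans (htwo a c))
        (fun e he g hg ↦ huniv e (hYX he) g (hYX hg)) fun g hg a c hac ha ↦ ?_
      · simp only [coe_sdiff, coe_edgeFinset, Set.mem_sdiff, mem_coe, I, mem_incidenceFinset]
        refine ⟨edgeSet_mono le_top hp, fun hpb ↦ hYb e he ?_⟩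
        obtain ⟨t, rfl⟩ := hpb.2
        exact ⟨t, hp⟩
      · have hab : a ≠ b := fun h ↦ hYb g hg (h ▸ ⟨c, hac⟩)
        exact hYb g hg ⟨a, (ha hab).symm⟩
    have hsplit : #{e ∈ X.erase f | b ∈ (H e).support} + #Y = #(X.erase f) :=
      card_filter_add_card_filter_not _
    have hI : #((⊤ : SimpleGraph β).edgeFinset \ I) + #I = #(⊤ : SimpleGraph β).edgeFinset :=
      card_sdiff_add_card_eq_card ((⊤ : SimpleGraph β).incidenceFinset_subset b)
    have := card_erase_add_one hf
    omega

end GraphFamilies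

variable {V : Type*} {G : SimpleGraph V} {a b u v x y z : V}

section Geodesics

variable {p : G.Walk a b} {i j : ℕ}

theorem dist_add_dist_of_mem_support (hp : p.length = G.dist a b) (hx : x ∈ p.support) :
    G.dist a x + G.dist x b = G.dist a b := by
  classical
  rw [← length_eq_dist_of_subwalk hp (p.isSubwalk_takeUntil hx),
    ← length_eq_dist_of_subwalk hp (p.isSubwalk_dropUntil hx), ← Walk.length_append,
    p.take_spec hx, hp]

theorem dist_getVert_getVert (hp : p.length = G.dist a b) (hij : i ≤ j) (hj : j ≤ p.length) :
    G.dist (p.getVert i) (p.getVert j) = j - i := by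
  have hq := length_eq_dist_of_subwalk hp
    (((p.drop i).isSubwalk_take (j - i)).trans (p.isSubwalk_drop i))
  rw [Walk.take_length, Walk.drop_length, Walk.drop_getVert, Nat.add_sub_cancel' hij] at hq
  omega

end Geodesics

section Sides

/-- The vertices strictly closer to `u` than to `v`, for which the literature on isometric
embeddings writes `W_{uv}`. It is only of interest when `u` and `v` are adjacent. As `G.dist` is `0`
between different components, vertices not reachable from `u` and `v` belong to no side. -/
def side (G : SimpleGraph V) (u v : V) : Set V :=
  {x | G.dist x u < G.dist x v}

theorem mem_side : x ∈ side G u v ↔ G.dist x u < G.dist x v := Iff.rfl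

theorem left_mem_side (huv : G.Adj u v) : u ∈ side G u v := by
  rw [mem_side, dist_self, dist_eq_one_iff_adj.2 huv]
  exact one_pos

theorem notMem_side_swap (hx : x ∈ side G u v) : x ∉ side G v u :=
  fun h ↦ lt_asymm (mem_side.1 hx) (mem_side.1 h)

theorem reachable_of_mem_side (hx : x ∈ side G u v) : G.Reachable x v :=
  .of_dist_ne_zero (Nat.ne_zero_of_lt hx)

theorem dist_eq_succ_of_mem_side (huv : G.Adj u v) (hx : x ∈ side G u v) :
    G.dist x v = G.dist x u + 1 := by
  have := huv.diff_dist_adj (u := x)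
  rw [mem_side] at hx
  omega

theorem mem_side_of_mem_support {p : G.Walk x u} (hp : p.length = G.dist x u)
    (hx : x ∈ side G u v) (hz : z ∈ p.support) : z ∈ side G u v := by
  classical
  have hadd := dist_add_dist_of_mem_support hp hz
  have htri := (p.takeUntil z hz).reachable.dist_triangle_left v
  rw [mem_side] at hx ⊢
  omega

theorem notMem_side_of_mem_support {p : G.Walk y v} (hp : p.length = G.dist y v)
    (hy : y ∉ side G u v) (hz : z ∈ p.support) : z ∉ side G u v := by
  classical
  have hadd := dist_add_dist_of_mem_support hp hz
  have htri := (p.takeUntil z hz).reachable.dist_triangle_left u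
  rw [mem_side] at hy ⊢
  omega

theorem getVert_mem_side_of_le {p : G.Walk a b} (hp : p.length = G.dist a b) {i j : ℕ}
    (hij : i ≤ j) (hj : j < p.length) :
    p.getVert i ∈ side G (p.getVert j) (p.getVert (j + 1)) := by
  rw [mem_side, dist_getVert_getVert hp hij hj.le, dist_getVert_getVert hp (by omega) hj]
  omega

theorem getVert_mem_side_of_lt {p : G.Walk a b} (hp : p.length = G.dist a b) {i j : ℕ}
    (hij : i < j) (hj : j ≤ p.length) :
    p.getVert j ∈ side G (p.getVert (i + 1)) (p.getVert i) := by
  rw [mem_side, G.dist_comm, G.dist_comm (v := p.getVert i), dist_getVert_getVert hp hij hj,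
    dist_getVert_getVert hp hij.le hj]
  omega

end Sides

section BlockGraphs

theorem isCycle_cons_append_cons {A : Set V} (huv : G.Adj u v) (hyx : G.Adj y x)
    {q : G.Walk v y} {p : G.Walk x u} (hq : q.IsPath) (hp : p.IsPath)
    (hqA : ∀ z ∈ q.support, z ∉ A) (hpA : ∀ z ∈ p.support, z ∈ A) (hne : s(u, v) ≠ s(y, x)) :
    (Walk.cons huv (q.append (Walk.cons hyx p))).IsCycle := by
  rw [Walk.cons_isCycle_iff]
  constructor
  · rw [Walk.isPath_def, Walk.support_append, Walk.support_cons, List.tail_cons, List.nodup_append']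
    exact ⟨hq.support_nodup, hp.support_nodup, fun z hzq hzp ↦ hqA z hzq (hpA z hzp)⟩
  · rw [Walk.edges_append, Walk.edges_cons, List.mem_append, List.mem_cons]
    rintro (h | h | h)
    · exact hqA u (q.fst_mem_support_of_mem_edges h) (hpA u p.end_mem_support)
    · exact hne h
    · exact hqA v q.start_mem_support (hpA v (p.snd_mem_support_of_mem_edges h))

/- Another exit `x` would lie on a cycle through `u` and `v`, hence be adjacent to both. -/
theorem eq_of_adj_of_mem_side (hB : G.IsBlockGraph) (huv : G.Adj u v) (hxy : G.Adj x y)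
    (hx : x ∈ side G u v) (hy : y ∉ side G u v) : x = u := by
  by_contra hxu
  have hxv : x ≠ v := fun h ↦
    notMem_side_swap (left_mem_side huv.symm) (h ▸ hx)
  have hyu : y ≠ u := by
    rintro rfl
    exact hy (left_mem_side huv)
  have hreach := reachable_of_mem_side hx
  obtain ⟨p, hp, hpd⟩ := (hreach.trans huv.symm.reachable).exists_path_of_dist
  obtain ⟨q, hq, hqd⟩ := (hxy.symm.reachable.trans hreach).exists_path_of_dist
  have hcycle : (Walk.cons huv (q.reverse.append (Walk.cons hxy.symm p))).IsCycle := by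
    refine isCycle_cons_append_cons (A := side G u v) huv hxy.symm hq.reverse hp
      (fun z hz ↦ ?_) (fun z ↦ mem_side_of_mem_support hpd hx) ?_
    · rw [Walk.support_reverse, List.mem_reverse] at hz
      exact notMem_side_of_mem_support hqd hy hz
    · simp [hyu.symm, Ne.symm hxu]
  have hclique := hB _ hcycle
  have hxu' : G.Adj x u := hclique (by simp) (by simp) hxu
  have hxv' : G.Adj x v := hclique (by simp) (by simp) hxv
  rw [mem_side, dist_eq_one_iff_adj.2 hxu', dist_eq_one_iff_adj.2 hxv'] at hx
  exact lt_irrefl _ hx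

theorem mem_support_of_mem_side (hB : G.IsBlockGraph) (huv : G.Adj u v) (hx : x ∈ side G u v)
    (hy : y ∉ side G u v) (p : G.Walk x y) : u ∈ p.support := by
  obtain ⟨d, hd, hfst, hsnd⟩ := p.exists_boundary_dart (side G u v) hx hy
  rw [← eq_of_adj_of_mem_side hB huv d.adj hfst hsnd]
  exact p.dart_fst_mem_support_of_mem_darts hd

theorem dist_eq_add_of_mem_side (hB : G.IsBlockGraph) (huv : G.Adj u v) (hx : x ∈ side G u v)
    (hy : y ∉ side G u v) (hxy : G.Reachable x y) :
    G.dist x y = G.dist x u + G.dist u y := by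
  obtain ⟨p, hp⟩ := hxy.exists_walk_length_eq_dist
  exact (dist_add_dist_of_mem_support hp (mem_support_of_mem_side hB huv hx hy p)).symm

theorem exists_getVert_eq_of_mem_side (hB : G.IsBlockGraph) (huv : G.Adj u v)
    (ha : a ∈ side G u v) (hb : b ∈ side G v u) {p : G.Walk a b} (hp : p.length = G.dist a b) :
    ∃ i < p.length, p.getVert i = u ∧ p.getVert (i + 1) = v := by
  have hu := mem_support_of_mem_side hB huv ha (notMem_side_swap hb) p
  have hv := mem_support_of_mem_side hB huv.symm hb (notMem_side_swap ha) p.reverse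
  rw [Walk.support_reverse, List.mem_reverse] at hv
  obtain ⟨i, rfl, hi⟩ := Walk.mem_support_iff_exists_getVert.1 hu
  obtain ⟨j, rfl, hj⟩ := Walk.mem_support_iff_exists_getVert.1 hv
  have hdist_a {k : ℕ} (hk : k ≤ p.length) : G.dist a (p.getVert k) = k := by
    simpa using dist_getVert_getVert hp (Nat.zero_le k) hk
  have hsucc := dist_eq_succ_of_mem_side huv ha
  rw [hdist_a hi, hdist_a hj] at hsucc
  exact ⟨i, by omega, rfl, by rw [hsucc]⟩

/- Everything beyond the first edge is reached through `p.getVert (i + 1)`, which is closer to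
`p.getVert j` than to `p.getVert (j + 1)`. -/
theorem compl_side_subset_side (hG : G.Preconnected) (hB : G.IsBlockGraph) {p : G.Walk a b}
    (hp : p.length = G.dist a b) {i j : ℕ} (hij : i < j) (hj : j < p.length) :
    (side G (p.getVert (i + 1)) (p.getVert i))ᶜ ⊆ side G (p.getVert j) (p.getVert (j + 1)) := by
  intro t ht
  have hadj : G.Adj (p.getVert (i + 1)) (p.getVert i) := (p.adj_getVert_succ (by omega)).symm
  have through {k : ℕ} (hik : i < k) (hk : k ≤ p.length) :
      G.dist t (p.getVert k) = k - (i + 1) + G.dist (p.getVert (i + 1)) t := by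
    rw [G.dist_comm, dist_eq_add_of_mem_side hB hadj (getVert_mem_side_of_lt hp hik hk) ht
      (hG _ _), G.dist_comm, dist_getVert_getVert hp hik hk]
  rw [mem_side, through hij hj.le, through (by omega) hj]
  omega

end BlockGraphs

section SimplicialVertices

theorem adj_of_common_neighbors (hB : G.IsBlockGraph) (huy : G.Adj u y) (hyv : G.Adj y v)
    (hvz : G.Adj v z) (hzu : G.Adj z u) (huv : u ≠ v) (hyz : y ≠ z) : G.Adj y z := by
  have hcycle : (Walk.cons huy (Walk.cons hyv (Walk.cons hvz (Walk.cons hzu .nil)))).IsCycle := by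
    simp [Walk.cons_isCycle_iff, Walk.cons_isPath_iff, huy.ne, huy.ne.symm, hyv.ne, hvz.ne, hzu.ne,
      huv.symm, huv, hyz]
  exact hB _ hcycle (by simp) (by simp) hyz

theorem isSimplicialVertex_of_forall_notMem_side (hB : G.IsBlockGraph) (huv : G.Adj u v)
    (hu : ∀ y, G.Adj u y → y ∉ side G u v) : G.IsSimplicialVertex u := by
  have eq_or_adj (y : V) (huy : G.Adj u y) : y = v ∨ G.Adj y v := by
    have hle : G.dist y v ≤ 1 := by
      simpa [mem_side, dist_eq_one_iff_adj.2 huy.symm] using hu y huy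
    by_contra! h
    have := (huy.symm.reachable.trans huv.reachable).one_lt_dist_of_ne_of_not_adj h.1 h.2
    omega
  intro y huy z huz hyz
  obtain rfl | hyv := eq_or_adj y huy
  · exact ((eq_or_adj z huz).resolve_left hyz.symm).symm
  obtain rfl | hzv := eq_or_adj z huz
  · exact hyv
  exact adj_of_common_neighbors hB huy hyv hzv.symm (G.adj_symm huz) huv.ne hyz

theorem side_ssubset_side (hB : G.IsBlockGraph) (huv : G.Adj u v) (huy : G.Adj u y)
    (hy : y ∈ side G u v) : side G y u ⊂ side G u v := by
  have hv : v ∉ side G y u := by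
    rw [mem_side, G.dist_comm, dist_eq_succ_of_mem_side huv hy, dist_eq_one_iff_adj.2 huy.symm,
      dist_eq_one_iff_adj.2 huv.symm]
    omega
  refine (Set.ssubset_iff_of_subset fun z hz ↦ ?_).2
    ⟨u, left_mem_side huv, notMem_side_swap (left_mem_side huy)⟩
  have hzv := dist_eq_add_of_mem_side hB huy.symm hz hv
    ((reachable_of_mem_side hz).trans huv.reachable)
  have hyv := dist_eq_succ_of_mem_side huv hy
  have hyu := dist_eq_one_iff_adj.2 huy.symm
  have hzu := dist_eq_succ_of_mem_side huy.symm hz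
  rw [mem_side]
  omega

theorem exists_isSimplicialVertex_mem_side [Finite V] (hB : G.IsBlockGraph) (huv : G.Adj u v) :
    ∃ x ∈ side G u v, G.IsSimplicialVertex x := by
  induction hA : side G u v using WellFoundedLT.induction generalizing u v with
  | _ A ih =>
    subst hA
    by_cases hu : ∀ y, G.Adj u y → y ∉ side G u v
    · exact ⟨u, left_mem_side huv, isSimplicialVertex_of_forall_notMem_side hB huv hu⟩
    · push Not at hu
      obtain ⟨y, huy, hy⟩ := hu
      have hlt := side_ssubset_side hB huv huy hy
      obtain ⟨x, hx, hsimp⟩ := ih _ hlt huy.symm rfl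
      exact ⟨x, hlt.subset hx, hsimp⟩

end SimplicialVertices

section Separation

variable {e f : Sym2 V}

/-- The graph joining the vertices that `e` separates: one end of `e` is strictly closer to one of
them and the other end to the other. In a block graph, when `e` is an edge, this says that `e` lies
on the geodesics between them. -/
def sepGraph (G : SimpleGraph V) (e : Sym2 V) : SimpleGraph V where
  Adj a b := ∃ u v, e = s(u, v) ∧ a ∈ side G u v ∧ b ∈ side G v u
  symm := ⟨fun _ _ ⟨u, v, he, ha, hb⟩ ↦ ⟨v, u, he.trans Sym2.eq_swap, hb, ha⟩⟩
  loopless := ⟨fun _ ⟨_, _, _, ha, hb⟩ ↦ notMem_side_swap ha hb⟩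

theorem sepGraph_adj_of_mem_side (ha : a ∈ side G u v) (hb : b ∈ side G v u) :
    (sepGraph G s(u, v)).Adj a b :=
  ⟨u, v, rfl, ha, hb⟩

theorem exists_getVert_eq_of_sepGraph_adj (hB : G.IsBlockGraph) (he : e ∈ G.edgeSet)
    (h : (sepGraph G e).Adj a b) {p : G.Walk a b} (hp : p.length = G.dist a b) :
    ∃ i < p.length, e = s(p.getVert i, p.getVert (i + 1)) := by
  obtain ⟨u, v, rfl, ha, hb⟩ := h
  obtain ⟨i, hi, rfl, rfl⟩ := exists_getVert_eq_of_mem_side hB he ha hb hp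
  exact ⟨i, hi, rfl⟩

theorem ncard_sepGraph_adj_le_two (hG : G.Preconnected) (hB : G.IsBlockGraph) {X : Set (Sym2 V)}
    (hX : G.IsEdgeGPSet X) (a b : V) : {e ∈ X | (sepGraph G e).Adj a b}.ncard ≤ 2 := by
  obtain ⟨p, hpath, hp⟩ := (hG a b).exists_path_of_dist
  have hsub : {e ∈ X | (sepGraph G e).Adj a b} ⊆ X ∩ {e | e ∈ p.edges} := by
    rintro e ⟨he, hab⟩
    obtain ⟨i, hi, rfl⟩ := exists_getVert_eq_of_sepGraph_adj hB (hX.1 he) hab hp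
    exact ⟨he, p.mk_mem_edges_iff_exists.2 ⟨i, hi, rfl⟩⟩
  have hfin : (X ∩ {e | e ∈ p.edges}).Finite :=
    (List.finite_toSet p.edges).subset Set.inter_subset_right
  exact (Set.ncard_le_ncard hsub hfin).trans (hX.2 a b p hpath hp)

theorem edgeSet_induce_sepGraph_nonempty [Finite V] (hB : G.IsBlockGraph) (he : e ∈ G.edgeSet) :
    ((sepGraph G e).induce {v | G.IsSimplicialVertex v}).edgeSet.Nonempty := by
  induction e with | _ u v
  obtain ⟨a, ha, has⟩ := exists_isSimplicialVertex_mem_side hB he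
  obtain ⟨b, hb, hbs⟩ := exists_isSimplicialVertex_mem_side hB he.symm
  exact ⟨s(⟨a, has⟩, ⟨b, hbs⟩), sepGraph_adj_of_mem_side ha hb⟩

theorem isUniversal_or_isUniversal_of_edgeSet_induce_sepGraph_eq (hG : G.Preconnected)
    (hB : G.IsBlockGraph) (he : e ∈ G.edgeSet) (hf : f ∈ G.edgeSet) (hef : e ≠ f) {S : Set V}
    {a b : S} (hea : ((sepGraph G e).induce S).edgeSet = {s(a, b)})
    (hfa : ((sepGraph G f).induce S).Adj a b) :
    ((sepGraph G f).induce S).IsUniversal a ∨ ((sepGraph G f).induce S).IsUniversal b := by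
  have eq_of_adj {c d : S} (h : (sepGraph G e).Adj c d) : s(c, d) = s(a, b) :=
    hea.subset (show s(c, d) ∈ ((sepGraph G e).induce S).edgeSet from h)
  have heab : ((sepGraph G e).induce S).Adj a b := by rw [← mem_edgeSet, hea]; rfl
  obtain ⟨p, hp⟩ := (hG a b).exists_walk_length_eq_dist
  obtain ⟨i, hi, rfl⟩ := exists_getVert_eq_of_sepGraph_adj hB he heab hp
  obtain ⟨j, hj, rfl⟩ := exists_getVert_eq_of_sepGraph_adj hB hf hfa hp
  have ha {k : ℕ} (hk : k < p.length) : ↑a ∈ side G (p.getVert k) (p.getVert (k + 1)) := by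
    simpa using getVert_mem_side_of_le hp (Nat.zero_le k) hk
  have hb {k : ℕ} (hk : k < p.length) : ↑b ∈ side G (p.getVert (k + 1)) (p.getVert k) := by
    simpa using getVert_mem_side_of_lt hp hk le_rfl
  obtain hij | rfl | hji := lt_trichotomy i j
  · right
    intro t hbt
    have ht : ↑t ∉ side G (p.getVert (i + 1)) (p.getVert i) := fun ht ↦
      hbt (Sym2.congr_right.1 (eq_of_adj (sepGraph_adj_of_mem_side (ha hi) ht))).symm
    exact (sepGraph_adj_of_mem_side (compl_side_subset_side hG hB hp hij hj ht) (hb hj)).symm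
  · exact absurd rfl hef
  · left
    intro t hat
    have ht : ↑t ∉ side G (p.getVert i) (p.getVert (i + 1)) := fun ht ↦
      hat (Sym2.congr_left.1 (eq_of_adj (sepGraph_adj_of_mem_side ht (hb hi)))).symm
    have ht' : ↑t ∈ side G (p.getVert (j + 1)) (p.getVert j) :=
      not_not.1 fun h ↦ ht (compl_side_subset_side hG hB hp hji hi h)
    exact sepGraph_adj_of_mem_side (ha hj) ht'

end Separation

end EdgeGeneralPosition

/-- If `G` is a finite connected block graph, then
`gp_e(G) ≤ C(s(G), 2) + 1`, where `s(G)` is the number of simplicial vertices of `G`. -/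
theorem egp_le_choose_simplicial {V : Type*} [Fintype V] (G : SimpleGraph V)
    (hG : G.Connected) (hb : G.IsBlockGraph) :
    G.egp ≤ ({v : V | G.IsSimplicialVertex v}.ncard).choose 2 + 1 := by
  classical
  refine csSup_le' ?_
  rintro _ ⟨X, hX, rfl⟩
  rw [Set.ncard_eq_toFinset_card' X, ← Nat.card_coe_set_eq, Nat.card_eq_fintype_card]
  have hmem {e : Sym2 V} (he : e ∈ X.toFinset) : e ∈ G.edgeSet := hX.1 (Set.mem_toFinset.1 he)
  refine EdgeGeneralPosition.card_le_choose_two_add_one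
    (fun e ↦ (EdgeGeneralPosition.sepGraph G e).induce {v | G.IsSimplicialVertex v})
    (fun e he ↦ EdgeGeneralPosition.edgeSet_induce_sepGraph_nonempty hb (hmem he))
    (fun a b ↦ ?_)
    fun e he f hf hef a b ↦
      EdgeGeneralPosition.isUniversal_or_isUniversal_of_edgeSet_induce_sepGraph_eq
        hG.preconnected hb (hmem he) (hmem hf) hef
  rw [← Set.ncard_coe_finset]
  simpa using EdgeGeneralPosition.ncard_sepGraph_adj_le_two hG.preconnected hb hX a b
end

section
/- Let n ≥ 2 and 1 ≤ k ≤ n, and let G be the graph obtained from the complete graph K_n by selecting k vertices of K_n and attaching to each selected vertex a separate pendant path (of arbitrary positive length). Then gp_e(G) = C(n, 2) + 1, where C(n,2) = n(n−1)/2; moreover, the edges of K_n together with any one additional edge of G form a largest edge general position set of G. -/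
/-- The graph obtained from the complete graph `K_n` (on `Fin n`) by selecting the `k`
vertices `σ 0, …, σ (k-1)` (`σ` injective) and attaching to the vertex `σ i` a separate
pendant path with `ℓ i` new vertices `(i, 0), …, (i, ℓ i - 1)`, the vertex `(i, 0)`
being joined to `σ i`. -/
def cliqueWithPendantPaths (n k : ℕ) (σ : Fin k ↪ Fin n) (ℓ : Fin k → ℕ) :
    SimpleGraph (Fin n ⊕ (Σ i : Fin k, Fin (ℓ i))) :=
  SimpleGraph.fromRel (fun a b =>
    match a, b with
    | Sum.inl _, Sum.inl _ => True
    | Sum.inl x, Sum.inr ⟨i, j⟩ => x = σ i ∧ j.1 = 0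
    | Sum.inr ⟨i, j⟩, Sum.inr ⟨i', j'⟩ => i.1 = i'.1 ∧ j.1 + 1 = j'.1
    | _, _ => False)

/-- The set of edges of the underlying complete graph `K_n`. -/
def cliqueEdges (n k : ℕ) (ℓ : Fin k → ℕ) : Set (Sym2 (Fin n ⊕ (Σ i : Fin k, Fin (ℓ i)))) :=
  {e | ∃ x y : Fin n, x ≠ y ∧ e = s(Sum.inl x, Sum.inl y)}

open SimpleGraph

section EdgeGeneralPosition

variable {V : Type*} {G : SimpleGraph V}

lemma le_add_length_of_forall_adj {f : V → ℤ} (hf : ∀ ⦃u v⦄, G.Adj u v → f v ≤ f u + 1) {u v : V}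
    (p : G.Walk u v) : f v ≤ f u + p.length := by
  induction p with
  | nil => simp
  | cons h p ih =>
    have := hf h
    rw [Walk.length_cons]
    omega

lemma length_eq_dist_of_forall_adj {f : V → ℤ} (hf : ∀ ⦃u v⦄, G.Adj u v → f v ≤ f u + 1) {u v : V}
    {p : G.Walk u v} (hp : f v = f u + p.length) : p.length = G.dist u v := by
  obtain ⟨q, hq⟩ := p.reachable.exists_walk_length_eq_dist
  have hle := le_add_length_of_forall_adj hf q
  have hge := dist_le p
  omega

lemma dist_getVert_getVert_add {u v : V} {p : G.Walk u v} (hp : p.length = G.dist u v) {i d : ℕ}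
    (h : i + d ≤ p.length) : G.dist (p.getVert i) (p.getVert (i + d)) = d := by
  have hsub : ((p.drop i).take d).IsSubwalk p :=
    ((p.drop i).isSubwalk_take d).trans (p.isSubwalk_drop i)
  have hlen := length_eq_dist_of_subwalk hp hsub
  rw [Walk.take_length, Walk.drop_length, Walk.drop_getVert] at hlen
  omega

lemma le_succ_of_getVert_mem_isClique {s : Set V} (hs : G.IsClique s) {u v : V} {p : G.Walk u v}
    (hp : p.length = G.dist u v) {i j : ℕ} (hj : j ≤ p.length) (his : p.getVert i ∈ s)
    (hjs : p.getVert j ∈ s) : j ≤ i + 1 := by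
  by_contra! hij
  obtain ⟨d, rfl⟩ := Nat.exists_eq_add_of_le (Nat.le_of_succ_le hij.le)
  have hdist := dist_getVert_getVert_add hp hj
  have hadj : G.Adj (p.getVert i) (p.getVert (i + d)) := by
    refine hs his hjs fun heq => ?_
    rw [← heq, dist_self] at hdist
    omega
  have hone := dist_eq_one_iff_adj.2 hadj
  omega

lemma subsingleton_sym2_inter_edges_of_isClique {s : Set V} (hs : G.IsClique s) {u v : V}
    {p : G.Walk u v} (hp : p.length = G.dist u v) :
    (s.sym2 ∩ {e | e ∈ p.edges}).Subsingleton := by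
  intro e he f hf
  induction e with | _ x y =>
  induction f with | _ z w =>
  obtain ⟨hxy, hxyp⟩ := he
  obtain ⟨hzw, hzwp⟩ := hf
  obtain ⟨i, hi, hixy⟩ := p.mk_mem_edges_iff_exists.1 hxyp
  obtain ⟨j, hj, hjzw⟩ := p.mk_mem_edges_iff_exists.1 hzwp
  rw [← hixy, Set.mk_mem_sym2_iff] at hxy
  rw [← hjzw, Set.mk_mem_sym2_iff] at hzw
  have hij := le_succ_of_getVert_mem_isClique hs hp hi hzw.1 hxy.2
  have hji := le_succ_of_getVert_mem_isClique hs hp hj hxy.1 hzw.2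
  obtain rfl : i = j := by omega
  exact hixy.symm.trans hjzw

/-- The edges in `S` all lie on one shortest path of `G`. A walk whose length is the distance of its
ends is automatically a path. -/
def LiesOnGeodesic (G : SimpleGraph V) (S : Set (Sym2 V)) : Prop :=
  ∃ (u v : V) (p : G.Walk u v), p.length = G.dist u v ∧ ∀ e ∈ S, e ∈ p.edges

lemma LiesOnGeodesic.mono {S T : Set (Sym2 V)} (hT : LiesOnGeodesic G T) (hST : S ⊆ T) :
    LiesOnGeodesic G S :=
  let ⟨u, v, p, hp, hpT⟩ := hT
  ⟨u, v, p, hp, fun e he => hpT e (hST he)⟩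

lemma eq_or_eq_or_eq_of_liesOnGeodesic {X : Set (Sym2 V)} (hX : G.IsEdgeGPSet X) {a b c : Sym2 V}
    (ha : a ∈ X) (hb : b ∈ X) (hc : c ∈ X) (habc : LiesOnGeodesic G {a, b, c}) :
    a = b ∨ a = c ∨ b = c := by
  obtain ⟨u, v, p, hp, hpS⟩ := habc
  by_contra! hne
  have hfin : (X ∩ {e | e ∈ p.edges}).Finite := p.edges.finite_toSet.inter_of_right X
  refine (hX.2 u v p (p.isPath_of_length_eq_dist hp) hp).not_gt ((Set.two_lt_ncard hfin).2 ?_)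
  exact ⟨a, ⟨ha, hpS a (by simp)⟩, b, ⟨hb, hpS b (by simp)⟩, c, ⟨hc, hpS c (by simp)⟩, hne⟩

lemma isEdgeGPSet_insert_of_isClique {s : Set V} (hs : G.IsClique s) {e : Sym2 V}
    (he : e ∈ G.edgeSet) : G.IsEdgeGPSet (insert e (G.edgeSet ∩ s.sym2)) := by
  refine ⟨Set.insert_subset he Set.inter_subset_left, fun u v p _ hp => ?_⟩
  have hclique := subsingleton_sym2_inter_edges_of_isClique hs hp
  have hsub : insert e (G.edgeSet ∩ s.sym2) ∩ {f | f ∈ p.edges} ⊆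
      insert e (s.sym2 ∩ {f | f ∈ p.edges}) := by
    rintro f ⟨rfl | hf, hfp⟩
    · exact Set.mem_insert _ _
    · exact Set.mem_insert_of_mem _ ⟨hf.2, hfp⟩
  have : Finite ↥(s.sym2 ∩ {f | f ∈ p.edges}) := hclique.finite
  calc (insert e (G.edgeSet ∩ s.sym2) ∩ {f | f ∈ p.edges}).ncard
      ≤ (insert e (s.sym2 ∩ {f | f ∈ p.edges})).ncard :=
        Set.ncard_le_ncard hsub (Set.toFinite _)
    _ ≤ (s.sym2 ∩ {f | f ∈ p.edges}).ncard + 1 := Set.ncard_insert_le _ _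
    _ ≤ 2 := Nat.succ_le_succ (Set.ncard_le_one_iff_subsingleton.2 hclique)

lemma egp_eq_of_isEdgeGPSet {X : Set (Sym2 V)} (hX : G.IsEdgeGPSet X)
    (hmax : ∀ Y, G.IsEdgeGPSet Y → Y.ncard ≤ X.ncard) : G.egp = X.ncard :=
  IsGreatest.csSup_eq ⟨⟨X, hX, rfl⟩, by rintro _ ⟨Y, hY, rfl⟩; exact hmax Y hY⟩

end EdgeGeneralPosition

namespace cliqueWithPendantPaths

variable {n k : ℕ} {σ : Fin k ↪ Fin n} {ℓ : Fin k → ℕ}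

/-- The vertex at distance `m` from the clique on the `i`-th pendant path, where the attachment
vertex `σ i` counts as the vertex at distance `0`. -/
def pathVertex (σ : Fin k ↪ Fin n) {ℓ : Fin k → ℕ} (i : Fin k) :
    Fin (ℓ i + 1) → Fin n ⊕ (Σ i : Fin k, Fin (ℓ i)) :=
  Fin.cases (Sum.inl (σ i)) fun j => Sum.inr ⟨i, j⟩

/-- The edge joining the pendant vertex `a` to its neighbour in the direction of the clique. -/
def pendantEdge (σ : Fin k ↪ Fin n) {ℓ : Fin k → ℕ} (a : Σ i : Fin k, Fin (ℓ i)) :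
    Sym2 (Fin n ⊕ (Σ i : Fin k, Fin (ℓ i))) :=
  s(pathVertex σ a.1 a.2.castSucc, pathVertex σ a.1 a.2.succ)

/-- The signed distance from the attachment vertex `σ i`, negative on the `i`-th pendant path. It
changes by at most one along every edge, so it certifies that paths along which it increases
steadily are shortest paths. -/
def potential (σ : Fin k ↪ Fin n) (ℓ : Fin k → ℕ) (i : Fin k) :
    Fin n ⊕ (Σ i : Fin k, Fin (ℓ i)) → ℤ
  | Sum.inl x => if x = σ i then 0 else 1
  | Sum.inr a => if a.1 = i then -(a.2 + 1 : ℤ) else a.2 + 2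

lemma pathVertex_zero (i : Fin k) : pathVertex σ i (0 : Fin (ℓ i + 1)) = Sum.inl (σ i) := rfl

lemma pathVertex_succ (i : Fin k) (j : Fin (ℓ i)) : pathVertex σ i j.succ = Sum.inr ⟨i, j⟩ := rfl

lemma adj_inl_inl {x y : Fin n} :
    (cliqueWithPendantPaths n k σ ℓ).Adj (Sum.inl x) (Sum.inl y) ↔ x ≠ y := by
  simp [cliqueWithPendantPaths]

lemma adj_inl_inr {x : Fin n} {a : Σ i : Fin k, Fin (ℓ i)} :
    (cliqueWithPendantPaths n k σ ℓ).Adj (Sum.inl x) (Sum.inr a) ↔ x = σ a.1 ∧ a.2.1 = 0 := by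
  simp [cliqueWithPendantPaths]

lemma adj_inr_inr {i i' : Fin k} {j : Fin (ℓ i)} {j' : Fin (ℓ i')} :
    (cliqueWithPendantPaths n k σ ℓ).Adj (Sum.inr ⟨i, j⟩) (Sum.inr ⟨i', j'⟩) ↔
      i = i' ∧ (j.1 + 1 = j'.1 ∨ j'.1 + 1 = j.1) := by
  simp only [cliqueWithPendantPaths, fromRel_adj, Fin.val_inj]
  constructor
  · rintro ⟨-, ⟨h, hj⟩ | ⟨h, hj⟩⟩
    · exact ⟨h, Or.inl hj⟩
    · exact ⟨h.symm, Or.inr hj⟩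
  · rintro ⟨rfl, h⟩
    refine ⟨?_, h.imp (⟨rfl, ·⟩) (⟨rfl, ·⟩)⟩
    simp only [ne_eq, Sum.inr.injEq, Sigma.mk.injEq, heq_eq_eq, true_and, Fin.ext_iff]
    omega

lemma adj_pathVertex_castSucc_succ (i : Fin k) (j : Fin (ℓ i)) :
    (cliqueWithPendantPaths n k σ ℓ).Adj (pathVertex σ i j.castSucc) (pathVertex σ i j.succ) := by
  rw [pathVertex_succ]
  rcases Fin.eq_zero_or_eq_succ j.castSucc with h | ⟨j', h⟩
  · rw [h, pathVertex_zero, adj_inl_inr]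
    exact ⟨rfl, congrArg Fin.val h⟩
  · rw [h, pathVertex_succ, adj_inr_inr]
    exact ⟨rfl, Or.inl (congrArg Fin.val h).symm⟩

lemma pendantEdge_mem_edgeSet (a : Σ i : Fin k, Fin (ℓ i)) :
    pendantEdge σ a ∈ (cliqueWithPendantPaths n k σ ℓ).edgeSet :=
  adj_pathVertex_castSucc_succ a.1 a.2

lemma exists_pendantEdge_eq_of_adj_inr {u : Fin n ⊕ (Σ i : Fin k, Fin (ℓ i))}
    {a : Σ i : Fin k, Fin (ℓ i)} (h : (cliqueWithPendantPaths n k σ ℓ).Adj u (Sum.inr a)) :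
    ∃ b, pendantEdge σ b = s(u, Sum.inr a) := by
  obtain ⟨i, j⟩ := a
  rcases u with x | ⟨i', j'⟩
  · obtain ⟨rfl, hj⟩ := adj_inl_inr.1 h
    have hzero : j.castSucc = 0 := Fin.ext hj
    exact ⟨⟨i, j⟩, by rw [pendantEdge, hzero, pathVertex_zero, pathVertex_succ]⟩
  · obtain ⟨rfl, hj | hj⟩ := adj_inr_inr.1 h
    · have hsucc : j.castSucc = j'.succ := Fin.ext hj.symm
      exact ⟨⟨i', j⟩, by rw [pendantEdge, hsucc, pathVertex_succ, pathVertex_succ]⟩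
    · have hsucc : j'.castSucc = j.succ := Fin.ext hj.symm
      exact ⟨⟨i', j'⟩, by
        rw [pendantEdge, hsucc, pathVertex_succ, pathVertex_succ, Sym2.eq_swap]⟩

lemma edgeSet_eq_cliqueEdges_union_range_pendantEdge :
    (cliqueWithPendantPaths n k σ ℓ).edgeSet = cliqueEdges n k ℓ ∪ Set.range (pendantEdge σ) := by
  apply Set.Subset.antisymm
  · rintro ⟨u, v⟩ h
    rcases u with x | a
    · rcases v with y | b
      · exact Or.inl ⟨x, y, adj_inl_inl.1 ((mem_edgeSet _).1 h), rfl⟩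
      · exact Or.inr (exists_pendantEdge_eq_of_adj_inr h)
    · obtain ⟨b, hb⟩ := exists_pendantEdge_eq_of_adj_inr (Adj.symm h)
      exact Or.inr ⟨b, hb.trans Sym2.eq_swap⟩
  · rintro _ (⟨x, y, hxy, rfl⟩ | ⟨a, rfl⟩)
    · exact (mem_edgeSet _).2 (adj_inl_inl.2 hxy)
    · exact pendantEdge_mem_edgeSet a

lemma pendantEdge_ne_mk_inl_inl (a : Σ i : Fin k, Fin (ℓ i)) (x y : Fin n) :
    pendantEdge σ a ≠ s(Sum.inl x, Sum.inl y) := by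
  simp [pendantEdge, pathVertex_succ]

lemma pendantEdge_notMem_cliqueEdges (a : Σ i : Fin k, Fin (ℓ i)) :
    pendantEdge σ a ∉ cliqueEdges n k ℓ := by
  rintro ⟨x, y, -, h⟩
  exact pendantEdge_ne_mk_inl_inl a x y h

lemma edgeSet_inter_sym2_range_inl :
    (cliqueWithPendantPaths n k σ ℓ).edgeSet ∩ (Set.range Sum.inl).sym2 = cliqueEdges n k ℓ := by
  apply Set.Subset.antisymm
  · rintro ⟨_, _⟩ ⟨h, ⟨x, rfl⟩, ⟨y, rfl⟩⟩
    exact ⟨x, y, adj_inl_inl.1 ((mem_edgeSet _).1 h), rfl⟩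
  · rintro _ ⟨x, y, hxy, rfl⟩
    exact ⟨(mem_edgeSet _).2 (adj_inl_inl.2 hxy), ⟨x, rfl⟩, ⟨y, rfl⟩⟩

lemma isClique_range_inl : (cliqueWithPendantPaths n k σ ℓ).IsClique (Set.range Sum.inl) := by
  rintro _ ⟨x, rfl⟩ _ ⟨y, rfl⟩ hxy
  exact adj_inl_inl.2 fun h => hxy (congrArg _ h)

lemma ncard_cliqueEdges : (cliqueEdges n k ℓ).ncard = n.choose 2 := by
  have himage : cliqueEdges n k ℓ = Sym2.map Sum.inl '' (⊤ : SimpleGraph (Fin n)).edgeSet := by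
    ext e
    constructor
    · rintro ⟨x, y, hxy, rfl⟩
      exact ⟨s(x, y), hxy, rfl⟩
    · rintro ⟨⟨x, y⟩, hxy, rfl⟩
      exact ⟨x, y, hxy, rfl⟩
  rw [himage, Set.ncard_image_of_injective _ (Sym2.map.injective Sum.inl_injective),
    ← coe_edgeFinset, Set.ncard_coe_finset, card_edgeFinset_top_eq_card_choose_two,
    Fintype.card_fin]

lemma isEdgeGPSet_insert_cliqueEdges {e : Sym2 (Fin n ⊕ (Σ i : Fin k, Fin (ℓ i)))}
    (he : e ∈ (cliqueWithPendantPaths n k σ ℓ).edgeSet) :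
    (cliqueWithPendantPaths n k σ ℓ).IsEdgeGPSet (insert e (cliqueEdges n k ℓ)) :=
  edgeSet_inter_sym2_range_inl (σ := σ) ▸ isEdgeGPSet_insert_of_isClique isClique_range_inl he

lemma ncard_insert_cliqueEdges {e : Sym2 (Fin n ⊕ (Σ i : Fin k, Fin (ℓ i)))}
    (he : e ∉ cliqueEdges n k ℓ) : (insert e (cliqueEdges n k ℓ)).ncard = n.choose 2 + 1 := by
  rw [Set.ncard_insert_of_notMem he, ncard_cliqueEdges]

lemma potential_pathVertex (i i' : Fin k) (m : Fin (ℓ i' + 1)) :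
    potential σ ℓ i (pathVertex σ i' m) = if i' = i then -(m : ℤ) else m + 1 := by
  induction m using Fin.cases with
  | zero => simp [pathVertex_zero, potential]
  | succ j => simp [pathVertex_succ, potential, add_assoc]

lemma pendantEdge_injective : Function.Injective (pendantEdge (ℓ := ℓ) σ) := by
  intro a b h
  rcases Sym2.eq_iff.1 h with ⟨-, h⟩ | ⟨h, h'⟩
  · exact Sum.inr_injective h
  · -- Each of the two pendant vertices would be the predecessor of the other.
    have hpot := congrArg (potential σ ℓ a.1) h
    have hpot' := congrArg (potential σ ℓ a.1) h'
    simp only [potential_pathVertex, if_true, Fin.val_castSucc, Fin.val_succ] at hpot hpot'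
    split_ifs at hpot hpot' <;> omega

lemma potential_le_of_adj (i : Fin k) ⦃u v : Fin n ⊕ (Σ i : Fin k, Fin (ℓ i))⦄
    (h : (cliqueWithPendantPaths n k σ ℓ).Adj u v) :
    potential σ ℓ i v ≤ potential σ ℓ i u + 1 := by
  rw [← mem_edgeSet, edgeSet_eq_cliqueEdges_union_range_pendantEdge] at h
  rcases h with ⟨x, y, -, h⟩ | ⟨a, h⟩
  · rcases Sym2.eq_iff.1 h with ⟨rfl, rfl⟩ | ⟨rfl, rfl⟩ <;>
      simp only [potential] <;> split_ifs <;> omega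
  · rcases Sym2.eq_iff.1 h with ⟨rfl, rfl⟩ | ⟨rfl, rfl⟩ <;>
      simp only [potential_pathVertex, Fin.val_castSucc, Fin.val_succ] <;> split_ifs <;> omega

lemma exists_walk_pathVertex (i : Fin k) (m : Fin (ℓ i + 1)) :
    ∃ p : (cliqueWithPendantPaths n k σ ℓ).Walk (pathVertex σ i m) (Sum.inl (σ i)),
      p.length = m ∧ ∀ j : Fin (ℓ i), j.castSucc < m → pendantEdge σ ⟨i, j⟩ ∈ p.edges := by
  induction m using Fin.induction with
  | zero => exact ⟨Walk.nil, rfl, fun j hj => absurd hj (Fin.not_lt_zero _)⟩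
  | succ m ih =>
    obtain ⟨p, hlen, hp⟩ := ih
    refine ⟨Walk.cons (adj_pathVertex_castSucc_succ i m).symm p, by simp [hlen], fun j hj => ?_⟩
    rw [Walk.edges_cons, List.mem_cons]
    rcases (Fin.castSucc_lt_succ_iff.1 hj).eq_or_lt with rfl | hjm
    · exact Or.inl Sym2.eq_swap
    · exact Or.inr (hp j hjm)

lemma exists_pendant_walk (σ : Fin k ↪ Fin n) (ℓ : Fin k → ℕ) (i : Fin k) :
    ∃ p : (cliqueWithPendantPaths n k σ ℓ).Walk (pathVertex σ i (Fin.last _)) (Sum.inl (σ i)),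
      p.length = ℓ i ∧ ∀ j, pendantEdge σ ⟨i, j⟩ ∈ p.edges := by
  obtain ⟨p, hlen, hp⟩ := exists_walk_pathVertex (σ := σ) i (Fin.last (ℓ i))
  exact ⟨p, hlen, fun j => hp j (Fin.castSucc_lt_last j)⟩

lemma liesOnGeodesic_insert_pendant {i : Fin k} {y : Fin n} (hy : σ i ≠ y) :
    LiesOnGeodesic (cliqueWithPendantPaths n k σ ℓ)
      (insert s(Sum.inl (σ i), Sum.inl y) (pendantEdge σ '' {a | a.1 = i})) := by
  obtain ⟨p, hlen, hp⟩ := exists_pendant_walk σ ℓ i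
  refine ⟨_, _, p.append (Walk.cons (adj_inl_inl.2 hy) Walk.nil),
    length_eq_dist_of_forall_adj (potential_le_of_adj i) ?_, ?_⟩
  · rw [potential_pathVertex]
    simp [potential, hlen, hy.symm]
  · rintro _ (rfl | ⟨⟨_, j⟩, rfl, rfl⟩)
    · simp
    · simp [hp j]

lemma liesOnGeodesic_insert_pendant_union_pendant {i i' : Fin k} (hii' : i ≠ i') :
    LiesOnGeodesic (cliqueWithPendantPaths n k σ ℓ)
      (insert s(Sum.inl (σ i), Sum.inl (σ i'))
        (pendantEdge σ '' ({a | a.1 = i} ∪ {a | a.1 = i'}))) := by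
  obtain ⟨p, hlen, hp⟩ := exists_pendant_walk σ ℓ i
  obtain ⟨p', hlen', hp'⟩ := exists_pendant_walk σ ℓ i'
  refine ⟨_, _, p.append (Walk.cons (adj_inl_inl.2 (σ.injective.ne hii')) p'.reverse),
    length_eq_dist_of_forall_adj (potential_le_of_adj i) ?_, ?_⟩
  · simp [potential_pathVertex, hlen, hlen', hii'.symm]
  · rintro _ (rfl | ⟨⟨_, j⟩, rfl | rfl, rfl⟩)
    · simp
    · simp [hp j]
    · simp [hp' j]

section UpperBound

variable {X : Set (Sym2 (Fin n ⊕ (Σ i : Fin k, Fin (ℓ i))))} {a b : Σ i : Fin k, Fin (ℓ i)}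

lemma mk_notMem_of_fst_eq (hX : (cliqueWithPendantPaths n k σ ℓ).IsEdgeGPSet X)
    (ha : pendantEdge σ a ∈ X) (hb : pendantEdge σ b ∈ X) (hab : a ≠ b) (hfst : a.1 = b.1)
    {y : Fin n} (hy : σ a.1 ≠ y) : s(Sum.inl (σ a.1), Sum.inl y) ∉ X := by
  intro hmem
  have hgeo := (liesOnGeodesic_insert_pendant (ℓ := ℓ) hy).mono
    (Set.insert_subset_insert (Set.image_mono (Set.pair_subset rfl hfst.symm)))
  rw [Set.image_pair] at hgeo
  rcases eq_or_eq_or_eq_of_liesOnGeodesic hX hmem ha hb hgeo with h | h | h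
  · exact pendantEdge_ne_mk_inl_inl a _ _ h.symm
  · exact pendantEdge_ne_mk_inl_inl b _ _ h.symm
  · exact hab (pendantEdge_injective h)

lemma mk_notMem_of_fst_ne (hX : (cliqueWithPendantPaths n k σ ℓ).IsEdgeGPSet X)
    (ha : pendantEdge σ a ∈ X) (hb : pendantEdge σ b ∈ X) (hfst : a.1 ≠ b.1) :
    s(Sum.inl (σ a.1), Sum.inl (σ b.1)) ∉ X := by
  intro hmem
  have hgeo := (liesOnGeodesic_insert_pendant_union_pendant (σ := σ) hfst).mono
    (Set.insert_subset_insert (Set.image_mono (Set.pair_subset (Or.inl rfl) (Or.inr rfl))))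
  rw [Set.image_pair] at hgeo
  rcases eq_or_eq_or_eq_of_liesOnGeodesic hX hmem ha hb hgeo with h | h | h
  · exact pendantEdge_ne_mk_inl_inl a _ _ h.symm
  · exact pendantEdge_ne_mk_inl_inl b _ _ h.symm
  · exact hfst (congrArg Sigma.fst (pendantEdge_injective h))

lemma preimage_pendantEdge_subset_pair (hn : 2 ≤ n)
    (hX : (cliqueWithPendantPaths n k σ ℓ).IsEdgeGPSet X) (ha : pendantEdge σ a ∈ X)
    (hb : pendantEdge σ b ∈ X) (hab : a ≠ b) (hfst : a.1 = b.1) :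
    pendantEdge σ ⁻¹' X ⊆ {a, b} := by
  intro c hc
  have hgeo : LiesOnGeodesic (cliqueWithPendantPaths n k σ ℓ) (pendantEdge σ '' {a, b, c}) := by
    rcases eq_or_ne c.1 a.1 with hca | hca
    · have : Nontrivial (Fin n) := Fin.nontrivial_iff_two_le.2 hn
      obtain ⟨y, hy⟩ := exists_ne (σ a.1)
      refine (liesOnGeodesic_insert_pendant hy.symm).mono
        ((Set.image_mono ?_).trans (Set.subset_insert _ _))
      rintro _ (rfl | rfl | rfl)
      exacts [rfl, hfst.symm, hca]
    · refine (liesOnGeodesic_insert_pendant_union_pendant hca.symm).mono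
        ((Set.image_mono ?_).trans (Set.subset_insert _ _))
      rintro _ (rfl | rfl | rfl)
      exacts [Or.inl rfl, Or.inl hfst.symm, Or.inr rfl]
  rw [Set.image_insert_eq, Set.image_pair] at hgeo
  rcases eq_or_eq_or_eq_of_liesOnGeodesic hX ha hb hc hgeo with h | h | h
  · exact absurd (pendantEdge_injective h) hab
  · exact Or.inl (pendantEdge_injective h.symm)
  · exact Or.inr (pendantEdge_injective h.symm)

lemma ncard_preimage_pendantEdge_le_of_injOn
    (hX : (cliqueWithPendantPaths n k σ ℓ).IsEdgeGPSet X)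
    (hinj : Set.InjOn Sigma.fst (pendantEdge σ ⁻¹' X)) :
    (pendantEdge σ ⁻¹' X).ncard ≤ (cliqueEdges n k ℓ \ X).ncard + 1 := by
  rcases (pendantEdge σ ⁻¹' X).eq_empty_or_nonempty with hempty | ⟨a, ha⟩
  · simp [hempty]
  rw [← Set.ncard_sdiff_singleton_add_one ha]
  refine Nat.succ_le_succ (Set.ncard_le_ncard_of_injOn
    (fun b => s(Sum.inl (σ a.1), Sum.inl (σ b.1))) ?_ ?_ (Set.toFinite _))
  · rintro b ⟨hb, hba⟩
    have hfst : a.1 ≠ b.1 := fun h => hba (hinj hb ha h.symm)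
    exact ⟨⟨_, _, σ.injective.ne hfst, rfl⟩, mk_notMem_of_fst_ne hX ha hb hfst⟩
  · rintro b ⟨hb, -⟩ c ⟨hc, -⟩ hbc
    exact hinj hb hc (σ.injective (Sum.inl_injective (Sym2.congr_right.1 hbc)))

lemma ncard_preimage_pendantEdge_le_of_not_injOn (hn : 2 ≤ n)
    (hX : (cliqueWithPendantPaths n k σ ℓ).IsEdgeGPSet X)
    (hinj : ¬ Set.InjOn Sigma.fst (pendantEdge σ ⁻¹' X)) :
    (pendantEdge σ ⁻¹' X).ncard ≤ (cliqueEdges n k ℓ \ X).ncard + 1 := by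
  simp only [Set.InjOn, not_forall] at hinj
  obtain ⟨a, ha, b, hb, hfst, hab⟩ := hinj
  have : Nontrivial (Fin n) := Fin.nontrivial_iff_two_le.2 hn
  obtain ⟨y, hy⟩ := exists_ne (σ a.1)
  have hmiss : s(Sum.inl (σ a.1), Sum.inl y) ∈ cliqueEdges n k ℓ \ X :=
    ⟨⟨_, _, hy.symm, rfl⟩, mk_notMem_of_fst_eq hX ha hb hab hfst hy.symm⟩
  calc (pendantEdge σ ⁻¹' X).ncard
      ≤ ({a, b} : Set _).ncard :=
        Set.ncard_le_ncard (preimage_pendantEdge_subset_pair hn hX ha hb hab hfst)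
    _ = 1 + 1 := Set.ncard_pair hab
    _ ≤ (cliqueEdges n k ℓ \ X).ncard + 1 :=
        Nat.succ_le_succ ((Set.ncard_pos (Set.toFinite _)).2 ⟨_, hmiss⟩)

lemma ncard_le_choose_two_add_one (hn : 2 ≤ n)
    (hX : (cliqueWithPendantPaths n k σ ℓ).IsEdgeGPSet X) : X.ncard ≤ n.choose 2 + 1 := by
  have hpendant : (pendantEdge σ ⁻¹' X).ncard ≤ (cliqueEdges n k ℓ \ X).ncard + 1 := by
    by_cases hinj : Set.InjOn Sigma.fst (pendantEdge σ ⁻¹' X)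
    · exact ncard_preimage_pendantEdge_le_of_injOn hX hinj
    · exact ncard_preimage_pendantEdge_le_of_not_injOn hn hX hinj
  have hcover : X ⊆ (cliqueEdges n k ℓ ∩ X) ∪ pendantEdge σ '' (pendantEdge σ ⁻¹' X) := by
    intro e he
    rcases edgeSet_eq_cliqueEdges_union_range_pendantEdge.subset (hX.1 he) with h | ⟨a, rfl⟩
    · exact Or.inl ⟨h, he⟩
    · exact Or.inr ⟨a, he, rfl⟩
  calc X.ncard
      ≤ ((cliqueEdges n k ℓ ∩ X) ∪ pendantEdge σ '' (pendantEdge σ ⁻¹' X)).ncard :=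
        Set.ncard_le_ncard hcover
    _ ≤ (cliqueEdges n k ℓ ∩ X).ncard + (pendantEdge σ ⁻¹' X).ncard :=
        (Set.ncard_union_le _ _).trans (Nat.add_le_add_left Set.ncard_image_le _)
    _ ≤ (cliqueEdges n k ℓ ∩ X).ncard + ((cliqueEdges n k ℓ \ X).ncard + 1) :=
        Nat.add_le_add_left hpendant _
    _ = n.choose 2 + 1 := by
        rw [← add_assoc, Set.ncard_inter_add_ncard_sdiff_eq_ncard, ncard_cliqueEdges]

end UpperBound

end cliqueWithPendantPaths

/-- Let `n ≥ 2`, `1 ≤ k ≤ n`, and let `G` be obtained from `K_n` by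
attaching a separate pendant path of positive length to each of `k` selected vertices.
Then `gp_e(G) = C(n,2) + 1`; moreover, the edges of `K_n` together with any one
additional edge of `G` form a largest edge general position set of `G`. -/
theorem egp_cliqueWithPendantPaths (n k : ℕ) (hn : 2 ≤ n) (hk1 : 1 ≤ k) (hkn : k ≤ n)
    (σ : Fin k ↪ Fin n) (ℓ : Fin k → ℕ) (hℓ : ∀ i, 1 ≤ ℓ i) :
    (cliqueWithPendantPaths n k σ ℓ).egp = n.choose 2 + 1 ∧
      ∀ e ∈ (cliqueWithPendantPaths n k σ ℓ).edgeSet, e ∉ cliqueEdges n k ℓ →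
        (cliqueWithPendantPaths n k σ ℓ).IsEdgeGPSet (insert e (cliqueEdges n k ℓ)) ∧
          (insert e (cliqueEdges n k ℓ)).ncard = (cliqueWithPendantPaths n k σ ℓ).egp := by
  let a : Σ i : Fin k, Fin (ℓ i) := ⟨⟨0, hk1⟩, ⟨0, hℓ _⟩⟩
  have hgp := cliqueWithPendantPaths.isEdgeGPSet_insert_cliqueEdges
    (cliqueWithPendantPaths.pendantEdge_mem_edgeSet (σ := σ) a)
  have hcard := cliqueWithPendantPaths.ncard_insert_cliqueEdges
    (cliqueWithPendantPaths.pendantEdge_notMem_cliqueEdges (σ := σ) a)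
  have hegp : (cliqueWithPendantPaths n k σ ℓ).egp = n.choose 2 + 1 := by
    rw [← hcard]
    refine egp_eq_of_isEdgeGPSet hgp fun Y hY => ?_
    rw [hcard]
    exact cliqueWithPendantPaths.ncard_le_choose_two_add_one hn hY
  exact ⟨hegp, fun e he hne => ⟨cliqueWithPendantPaths.isEdgeGPSet_insert_cliqueEdges he,
    (cliqueWithPendantPaths.ncard_insert_cliqueEdges hne).trans hegp.symm⟩⟩
end
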